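/- arXiv:2410.24003 — 5 statements merged into one kernel-verified Lean document; each statement's English description precedes it below -/
import Mathlib

section
/- Let X be a real-valued random variable with cumulative distribution function G, and let V be a random variable uniformly distributed on (0,1) and independent of X. Then the random variable U = G(X−) + V·ΔG(X) is uniformly distributed on (0,1); that is, P(U ≤ u) = u for every u ∈ [0,1]. -/
/-!
Let `F` be the cdf of the law `μ` of `X`. For `0 < u < 1` take the quantile
`x₀ = inf {x | u ≤ F x}`, so that `F(x₀-) ≤ u ≤ F(x₀)` (`exists_quantile`). Almost surely `U ≤ u`
holds iff either `X < x₀`, or `X = x₀` and `V * ΔF(x₀) ≤ u - F(x₀-)`: for `X < x₀` one has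
`U ≤ F(X) < u`, while for `X > x₀`, `U ≤ u` forces `F(X) = F(x₀)`, a null event
(`measure_flat_eq_zero`). The first event has probability `F(x₀-)`, and by independence the second
has probability `u - F(x₀-)` (`atom_mul_uniform`). The endpoints follow from `0 ≤ U ≤ 1` almost
surely and, at `u = 0`, monotonicity in `u`.
-/

open MeasureTheory ProbabilityTheory Filter Set

noncomputable section

/-- The jump `ΔG(x) = G(x) - G(x-)` of a function `G` at `x`. -/
def jump (G : ℝ → ℝ) (x : ℝ) : ℝ := G x - Function.leftLim G x

open scoped Topology

lemma exists_quantile (μ : Measure ℝ) {u : ℝ} (hu0 : 0 < u) (hu1 : u < 1) :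
    ∃ x₀, (∀ x < x₀, cdf μ x < u) ∧ Function.leftLim (cdf μ) x₀ ≤ u ∧ u ≤ cdf μ x₀ := by
  obtain ⟨b, hb⟩ := ((tendsto_cdf_atTop μ).eventually (lt_mem_nhds hu1)).exists
  obtain ⟨a, ha⟩ := ((tendsto_cdf_atBot μ).eventually (gt_mem_nhds hu0)).exists
  have hbdd : BddBelow {x | u ≤ cdf μ x} := by
    refine ⟨a, fun x hx => ?_⟩
    by_contra! h
    exact absurd (hx.trans (monotone_cdf μ h.le)) (not_le.2 ha)
  have hlt : ∀ x < sInf {x | u ≤ cdf μ x}, cdf μ x < u := fun x hx => by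
    by_contra! h
    exact absurd (csInf_le hbdd h) (not_le.2 hx)
  refine ⟨sInf {x | u ≤ cdf μ x}, hlt, ?_, ?_⟩
  · refine le_of_tendsto ((monotone_cdf μ).tendsto_leftLim _) ?_
    filter_upwards [self_mem_nhdsWithin] with x hx using (hlt x hx).le
  · rw [← (cdf μ).iInf_Ioi_eq]
    refine le_ciInf fun y => ?_
    obtain ⟨z, hz, hzy⟩ := exists_lt_of_csInf_lt ⟨b, hb.le⟩ y.2
    exact le_trans hz (monotone_cdf μ hzy.le)

/-- The law gives no mass to the stretch to the right of `x₀` on which its cdf stays flat. -/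
lemma measure_flat_eq_zero (μ : Measure ℝ) [IsProbabilityMeasure μ] (x₀ : ℝ) :
    μ {x | x₀ < x ∧ cdf μ x ≤ cdf μ x₀} = 0 := by
  have hm : MeasurableSet {x | x₀ < x ∧ cdf μ x ≤ cdf μ x₀} :=
    measurableSet_Ioi.inter ((monotone_cdf μ).measurable measurableSet_Iic)
  -- By inner regularity it is enough to consider compact subsets, which have a largest element.
  rw [hm.measure_eq_iSup_isCompact]
  simp only [ENNReal.iSup_eq_zero]
  intro K hK hKc
  rcases K.eq_empty_or_nonempty with rfl | hne
  · simp
  obtain ⟨b, hbK, hb⟩ := hKc.exists_isGreatest hne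
  refine measure_mono_null (t := Ioc x₀ b) (fun x hx => ⟨(hK hx).1, hb hx⟩) ?_
  rw [← measure_cdf μ, StieltjesFunction.measure_Ioc]
  simpa using (hK hbK).2

lemma atom_mul_uniform {d c : ℝ} (hc0 : 0 ≤ c) (hcd : c ≤ d) :
    ENNReal.ofReal d * volume.restrict (Ioo (0:ℝ) 1) {v | v * d ≤ c} = ENNReal.ofReal c := by
  rcases (hc0.trans hcd).eq_or_lt with rfl | hd
  · simp [le_antisymm hcd hc0]
  have h1 : {v : ℝ | v * d ≤ c} = Iic (c / d) := by
    ext v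
    simp [le_div_iff₀ hd]
  have h2 : Iic (c / d) ∩ Ioc (0:ℝ) 1 = Ioc 0 (c / d) := by
    ext v
    have : c / d ≤ 1 := (div_le_one hd).2 hcd
    simp only [mem_inter_iff, mem_Iic, mem_Ioc]
    grind
  rw [h1, Measure.restrict_congr_set Ioo_ae_eq_Ioc, Measure.restrict_apply measurableSet_Iic, h2,
    Real.volume_Ioc, ← ENNReal.ofReal_mul hd.le]
  congr 1
  field_simp
  ring

/-- If `X` is a real random variable with cdf `G` and `V` is uniform on `(0,1)` and
independent of `X`, then `U = G(X-) + V·ΔG(X)` is uniform on `(0,1)`: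
`P(U ≤ u) = u` for every `u ∈ [0,1]`. -/
theorem stmt0 {Ω : Type*} [MeasurableSpace Ω] (P : Measure Ω) [IsProbabilityMeasure P]
    (X V : Ω → ℝ) (hX : Measurable X) (hV : Measurable V)
    (hVunif : Measure.map V P = volume.restrict (Set.Ioo (0:ℝ) 1))
    (hindep : IndepFun X V P)
    (G : ℝ → ℝ) (hG : ∀ x, G x = (P {ω | X ω ≤ x}).toReal) :
    ∀ u ∈ Set.Icc (0:ℝ) 1,
      (P {ω | Function.leftLim G (X ω) + V ω * jump G (X ω) ≤ u}).toReal = u := by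
  have hprob : IsProbabilityMeasure (P.map X) := Measure.isProbabilityMeasure_map hX.aemeasurable
  set μ := P.map X with hμ
  obtain rfl : G = cdf μ := by
    funext x
    rw [hG, cdf_eq_real, measureReal_def, hμ, Measure.map_apply hX measurableSet_Iic]
    rfl
  have hVmem : ∀ᵐ ω ∂P, V ω ∈ Ioo (0:ℝ) 1 := by
    refine ae_of_ae_map hV.aemeasurable ?_
    rw [hVunif]
    exact ae_restrict_mem measurableSet_Ioo
  have hmono := monotone_cdf μ
  have hleft : ∀ x, Function.leftLim (cdf μ) x ≤ cdf μ x := fun x => hmono.leftLim_le le_rfl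
  have hleft0 : ∀ x, 0 ≤ Function.leftLim (cdf μ) x := fun x =>
    (cdf_nonneg μ (x - 1)).trans (hmono.le_leftLim (by linarith))
  have hUle : ∀ ω, V ω ∈ Ioo (0:ℝ) 1 →
      Function.leftLim (cdf μ) (X ω) + V ω * jump (cdf μ) (X ω) ≤ cdf μ (X ω) := fun ω hω => by
    have := hleft (X ω)
    unfold jump
    nlinarith [hω.2]
  have hmain : ∀ u, 0 < u → u < 1 →
      P {ω | Function.leftLim (cdf μ) (X ω) + V ω * jump (cdf μ) (X ω) ≤ u}
        = ENNReal.ofReal u := by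
    intro u hu0 hu1
    obtain ⟨x₀, hlt, hl, hr⟩ := exists_quantile μ hu0 hu1
    have hflat : ∀ᵐ ω ∂P, ¬ (x₀ < X ω ∧ cdf μ (X ω) ≤ cdf μ x₀) :=
      ae_of_ae_map (p := fun x => ¬ (x₀ < x ∧ cdf μ x ≤ cdf μ x₀)) hX.aemeasurable
        (by simpa [ae_iff] using measure_flat_eq_zero μ x₀)
    set c := u - Function.leftLim (cdf μ) x₀ with hc
    have hmV : MeasurableSet {v : ℝ | v * jump (cdf μ) x₀ ≤ c} :=
      measurableSet_le (by fun_prop) measurable_const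
    have hset : ({ω | Function.leftLim (cdf μ) (X ω) + V ω * jump (cdf μ) (X ω) ≤ u} : Set Ω)
        =ᵐ[P] (X ⁻¹' Iio x₀ ∪ (X ⁻¹' {x₀} ∩ V ⁻¹' {v | v * jump (cdf μ) x₀ ≤ c}) : Set Ω) := by
      refine eventuallyEq_set.2 ?_
      filter_upwards [hVmem, hflat] with ω hω hf
      simp only [mem_ofPred_eq, mem_union, mem_preimage, mem_Iio, mem_inter_iff, mem_singleton_iff]
      rcases lt_trichotomy (X ω) x₀ with h | h | h
      · simp only [h, true_or, iff_true]
        exact (hUle ω hω).trans (hlt _ h).le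
      · simp only [h, lt_irrefl, false_or, true_and, hc]
        constructor <;> intro h <;> linarith
      · simp only [h.not_gt, h.ne', false_and, or_false, iff_false]
        intro hU
        apply hf
        refine ⟨h, ?_⟩
        have h1 := hleft (X ω)
        have h2 : cdf μ x₀ ≤ Function.leftLim (cdf μ) (X ω) := hmono.le_leftLim h
        unfold jump at hU
        -- `V > 0` and `u ≤ F(x₀) ≤ F(X-)` leave no room for a jump at `X`.
        have h3 : cdf μ (X ω) - Function.leftLim (cdf μ) (X ω) ≤ 0 := by
          by_contra! h4
          nlinarith [mul_pos hω.1 h4]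
        nlinarith [mul_nonneg hω.1.le (sub_nonneg.2 h1)]
    rw [measure_congr hset, measure_union _ ((hX (measurableSet_singleton _)).inter (hV hmV)),
      hindep.measure_inter_preimage_eq_mul _ _ (measurableSet_singleton _) hmV,
      ← Measure.map_apply hX measurableSet_Iio, ← Measure.map_apply hX (measurableSet_singleton _),
      ← Measure.map_apply hV hmV, hVunif, ← hμ]
    · have e1 : μ (Iio x₀) = ENNReal.ofReal (Function.leftLim (cdf μ) x₀) := by
        conv_lhs => rw [← measure_cdf μ]
        rw [StieltjesFunction.measure_Iio _ (tendsto_cdf_atBot μ), sub_zero]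
      have e2 : μ {x₀} = ENNReal.ofReal (jump (cdf μ) x₀) := by
        conv_lhs => rw [← measure_cdf μ]
        rw [StieltjesFunction.measure_singleton, jump]
      have hc0 : 0 ≤ c := sub_nonneg.2 hl
      rw [e1, e2, atom_mul_uniform hc0 (by unfold jump; linarith),
        ← ENNReal.ofReal_add (hleft0 _) hc0]
      congr 1
      ring
    · refine disjoint_left.2 fun ω h1 h2 => ?_
      exact absurd h2.1 (ne_of_lt h1)
  rintro u ⟨hu0, hu1⟩
  rcases hu0.eq_or_lt with rfl | hu0
  · -- `P(U ≤ 0) ≤ P(U ≤ ε) = ε` for every `ε ∈ (0, 1)`.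
    refine le_antisymm (le_of_forall_pos_le_add fun ε hε => ?_) ENNReal.toReal_nonneg
    have hε' : 0 < min ε (1 / 2) := lt_min hε (by norm_num)
    have h := hmain (min ε (1 / 2)) hε' ((min_le_right _ _).trans_lt (by norm_num))
    rw [zero_add]
    refine (ENNReal.toReal_le_of_le_ofReal hε'.le (h ▸ measure_mono ?_)).trans (min_le_left _ _)
    exact fun ω hω => le_trans hω hε'.le
  rcases hu1.eq_or_lt with rfl | hu1
  · have : ∀ᵐ ω ∂P, Function.leftLim (cdf μ) (X ω) + V ω * jump (cdf μ) (X ω) ≤ 1 := by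
      filter_upwards [hVmem] with ω hω using (hUle ω hω).trans (cdf_le_one μ _)
    rw [measure_congr (eventuallyEq_univ.2 this), measure_univ, ENNReal.toReal_one]
  · rw [hmain u hu0 hu1, ENNReal.toReal_ofReal hu0.le]
end
end

section
/- Let X be a real-valued random variable with cdf G. For u, v ∈ (0,1), define χ_{0,G}(u,v) as follows: if G^{−1}(u) = G^{−1}(v) and this common point x = G^{−1}(u) is an atom of G (i.e., ΔG(x) > 0), set χ_{0,G}(u,v) = (min(u,v) − G(x−))·(G(x) − max(u,v))/ΔG(x); otherwise set χ_{0,G}(u,v) = 0. Then for all u, v ∈ (0,1), E[J_G(X,u)·J_G(X,v)] = min(u,v) − χ_{0,G}(u,v); equivalently, E[J_G(X,u)·J_G(X,v)] − uv = min(u,v) − uv − χ_{0,G}(u,v). -/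
/-!
Write `q = G⁻¹(u)`. Up to a `μ`-null set, `J_G(·, u)` is the step function equal to `1` on
`(-∞, q)`, to `J_G(q, u)` at `q`, and to `0` on `(q, ∞)` (`JG_ae_eq`); the exceptional set is
the part of the flat stretch `{G = u}` lying to the right of `q`. The weight at `q` satisfies
`ΔG(q) * J_G(q, u) = u - G(q-)` (`jump_mul_JG`).

Let `u ≤ v`, so that `G⁻¹(u) ≤ G⁻¹(v)`. If the inequality is strict, the product of the two step
functions is the one for `u`, whose integral is `G(q-) + (u - G(q-)) = u`. If both quantiles equal
`q`, the product is the step function with weight `J_G(q, u) * J_G(q, v)` at `q`; its integral is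
`G(q-) + (u - G(q-)) * (v - G(q-)) / ΔG(q)` when `q` is an atom, and `G(q-) = u` otherwise.
-/

open MeasureTheory ProbabilityTheory Filter Set
open scoped Classical

noncomputable section

/-- `D(u) = min(1, max(0,u))`, the cdf of the uniform distribution on `(0,1)`. -/
def unifD (u : ℝ) : ℝ := min 1 (max 0 u)

/-- `J_G(x,u)`. -/
def JG (G : ℝ → ℝ) (x u : ℝ) : ℝ :=
  if 0 < jump G x then unifD ((u - Function.leftLim G x) / jump G x)
  else if G x ≤ u then 1 else 0

/-- Generalized inverse `G⁻¹(u) = inf {x : G(x) ≥ u}`. -/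
def Ginv (G : ℝ → ℝ) (u : ℝ) : ℝ := sInf {x : ℝ | u ≤ G x}

/-- `χ_{0,G}(u,v)`: equals `(min(u,v) - G(x-))·(G(x) - max(u,v))/ΔG(x)` with
`x = G⁻¹(u)` when `G⁻¹(u) = G⁻¹(v)` is an atom of `G`, and `0` otherwise. -/
def chi0 (G : ℝ → ℝ) (u v : ℝ) : ℝ :=
  if Ginv G u = Ginv G v ∧ 0 < jump G (Ginv G u) then
    (min u v - Function.leftLim G (Ginv G u)) * (G (Ginv G u) - max u v) / jump G (Ginv G u)
  else 0

/-- The step function `1_{(-∞, q)} + c 1_{q}`. -/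
def stepFun (q c x : ℝ) : ℝ := if x < q then 1 else if x = q then c else 0

section Quantile

variable (μ : Measure ℝ)

lemma Ginv_spec {u : ℝ} (hu : u ∈ Ioo (0:ℝ) 1) :
    (∀ x, x < Ginv (cdf μ) u → cdf μ x < u) ∧ u ≤ cdf μ (Ginv (cdf μ) u) := by
  have hbdd : BddBelow {x : ℝ | u ≤ cdf μ x} := by
    obtain ⟨a, ha⟩ := ((tendsto_cdf_atBot μ).eventually (gt_mem_nhds hu.1)).exists
    refine ⟨a, fun x hx => ?_⟩
    by_contra! h
    exact absurd (hx.trans (monotone_cdf μ h.le)) (not_le.2 ha)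
  have hne : {x : ℝ | u ≤ cdf μ x}.Nonempty := by
    obtain ⟨a, ha⟩ := ((tendsto_cdf_atTop μ).eventually (lt_mem_nhds hu.2)).exists
    exact ⟨a, ha.le⟩
  refine ⟨fun x hx => ?_, ?_⟩
  · by_contra! h
    exact absurd (csInf_le hbdd h) (not_le.2 hx)
  · -- right-continuity of the cdf: the infimum is attained
    have ht : Tendsto (cdf μ) (nhdsWithin (Ginv (cdf μ) u) (Ioi (Ginv (cdf μ) u)))
        (nhds (cdf μ (Ginv (cdf μ) u))) :=
      ((cdf μ).right_continuous _).mono_left (nhdsWithin_mono _ Ioi_subset_Ici_self)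
    refine ge_of_tendsto ht ?_
    filter_upwards [self_mem_nhdsWithin] with y hy
    obtain ⟨z, hz, hzy⟩ := exists_lt_of_csInf_lt hne hy
    exact le_trans hz (monotone_cdf μ hzy.le)

lemma leftLim_Ginv_le {u : ℝ} (hu : u ∈ Ioo (0:ℝ) 1) :
    Function.leftLim (cdf μ) (Ginv (cdf μ) u) ≤ u := by
  refine le_of_tendsto ((monotone_cdf μ).tendsto_leftLim _) ?_
  filter_upwards [self_mem_nhdsWithin] with y hy
  exact ((Ginv_spec μ hu).1 y hy).le

lemma Ginv_mono {u v : ℝ} (hu : u ∈ Ioo (0:ℝ) 1) (hv : v ∈ Ioo (0:ℝ) 1) (huv : u ≤ v) :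
    Ginv (cdf μ) u ≤ Ginv (cdf μ) v := by
  by_contra! h
  linarith [(Ginv_spec μ hu).1 _ h, (Ginv_spec μ hv).2]

lemma jump_nonneg (x : ℝ) : 0 ≤ jump (cdf μ) x :=
  sub_nonneg.2 ((monotone_cdf μ).leftLim_le le_rfl)

lemma jump_mul_JG {u : ℝ} (hu : u ∈ Ioo (0:ℝ) 1) :
    jump (cdf μ) (Ginv (cdf μ) u) * JG (cdf μ) (Ginv (cdf μ) u) u
      = u - Function.leftLim (cdf μ) (Ginv (cdf μ) u) := by
  have h1 := leftLim_Ginv_le μ hu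
  have h2 := (Ginv_spec μ hu).2
  rcases (jump_nonneg μ (Ginv (cdf μ) u)).eq_or_lt with h | h
  · rw [← h, zero_mul]
    unfold jump at h
    linarith
  · have h3 : 0 ≤ (u - Function.leftLim (cdf μ) (Ginv (cdf μ) u)) / jump (cdf μ) (Ginv (cdf μ) u) :=
      div_nonneg (by linarith) h.le
    have h4 : (u - Function.leftLim (cdf μ) (Ginv (cdf μ) u)) / jump (cdf μ) (Ginv (cdf μ) u) ≤ 1 := by
      rw [div_le_one h]
      unfold jump
      linarith
    rw [JG, if_pos h, unifD, max_eq_right h3, min_eq_right h4]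
    field_simp

variable [IsProbabilityMeasure μ]

lemma integral_stepFun (q c : ℝ) :
    ∫ x, stepFun q c x ∂μ = Function.leftLim (cdf μ) q + jump (cdf μ) q * c := by
  have h1 : μ.real (Iio q) = Function.leftLim (cdf μ) q := by
    have h0 : 0 ≤ Function.leftLim (cdf μ) q :=
      (cdf_nonneg μ (q - 1)).trans ((monotone_cdf μ).le_leftLim (by linarith))
    have := (cdf μ).measure_Iio (tendsto_cdf_atBot μ) q
    rw [measure_cdf, sub_zero] at this
    rw [Measure.real, this, ENNReal.toReal_ofReal h0]
  have h2 : μ.real {q} = jump (cdf μ) q := by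
    have := (cdf μ).measure_singleton q
    rw [measure_cdf] at this
    rw [Measure.real, this]
    exact ENNReal.toReal_ofReal (jump_nonneg μ q)
  have h3 : stepFun q c = fun x => (Iio q).indicator (fun _ => (1:ℝ)) x
      + ({q} : Set ℝ).indicator (fun _ => c) x := by
    funext x
    rcases lt_trichotomy x q with h | h | h
    · simp [stepFun, h, h.ne]
    · simp [stepFun, h]
    · simp [stepFun, h.not_gt, h.ne']
  rw [h3, integral_add ((integrable_const _).indicator measurableSet_Iio)
    ((integrable_const _).indicator (measurableSet_singleton q)),
    integral_indicator_const _ measurableSet_Iio,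
    integral_indicator_const _ (measurableSet_singleton q), h1, h2]
  simp

/-- The part of `{G = u}` to the right of `G⁻¹(u)` is null, being locally covered by intervals
`(G⁻¹(u), y]` over which `G` does not increase. -/
lemma measure_flat_eq_zero_s3 {u : ℝ} (hu : u ∈ Ioo (0:ℝ) 1) :
    μ {x | Ginv (cdf μ) u < x ∧ cdf μ x = u} = 0 := by
  set S := {x | Ginv (cdf μ) u < x ∧ cdf μ x = u} with hS
  have hI : ∀ y ∈ S, μ (Ioc (Ginv (cdf μ) u) y) = 0 := by
    rintro y ⟨-, hy⟩
    have := (cdf μ).measure_Ioc (Ginv (cdf μ) u) y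
    rw [measure_cdf] at this
    rw [this, ENNReal.ofReal_eq_zero]
    linarith [(Ginv_spec μ hu).2]
  refine measure_null_of_locally_null S fun x hx => ?_
  by_cases h : ∃ y ∈ S, x < y
  · obtain ⟨y, hy, hxy⟩ := h
    exact ⟨Ioc (Ginv (cdf μ) u) y,
      mem_nhdsWithin_of_mem_nhds (Ioc_mem_nhds hx.1 hxy), hI y hy⟩
  · push Not at h
    exact ⟨Ioc (Ginv (cdf μ) u) x,
      mem_of_superset self_mem_nhdsWithin fun y hy => ⟨hy.1, h y hy⟩, hI x hx⟩

lemma JG_ae_eq {u : ℝ} (hu : u ∈ Ioo (0:ℝ) 1) :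
    ∀ᵐ x ∂μ, JG (cdf μ) x u
      = stepFun (Ginv (cdf μ) u) (JG (cdf μ) (Ginv (cdf μ) u) u) x := by
  have h0 : ∀ᵐ x ∂μ, ¬ (Ginv (cdf μ) u < x ∧ cdf μ x = u) := by
    rw [ae_iff]
    simpa only [not_not] using measure_flat_eq_zero_s3 μ hu
  filter_upwards [h0] with x hx
  rcases lt_trichotomy x (Ginv (cdf μ) u) with h | h | h
  · have h1 := (Ginv_spec μ hu).1 x h
    rw [stepFun, if_pos h, JG]
    split_ifs with h2 h3
    · rw [unifD, min_eq_left]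
      refine le_max_of_le_right ?_
      rw [le_div_iff₀ h2, jump]
      linarith
    · rfl
    · exact absurd h1.le h3
  · simp [stepFun, h]
  · have h1 : u ≤ Function.leftLim (cdf μ) x :=
      (Ginv_spec μ hu).2.trans ((monotone_cdf μ).le_leftLim h)
    have h2 : u ≤ cdf μ x := h1.trans ((monotone_cdf μ).leftLim_le le_rfl)
    rw [stepFun, if_neg h.not_gt, if_neg h.ne', JG]
    split_ifs with h3 h4
    · rw [unifD, max_eq_left (div_nonpos_of_nonpos_of_nonneg (by linarith) h3.le)]
      simp
    · exact absurd ⟨h, le_antisymm h4 h2⟩ hx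
    · rfl

lemma integral_JG_mul_of_le {u v : ℝ} (hu : u ∈ Ioo (0:ℝ) 1) (hv : v ∈ Ioo (0:ℝ) 1)
    (huv : u ≤ v) :
    ∫ x, JG (cdf μ) x u * JG (cdf μ) x v ∂μ = u - chi0 (cdf μ) u v := by
  have hcu := jump_mul_JG μ hu
  have hcv := jump_mul_JG μ hv
  rcases (Ginv_mono μ hu hv huv).lt_or_eq with h | h
  · have hint : ∫ x, JG (cdf μ) x u * JG (cdf μ) x v ∂μ
        = ∫ x, stepFun (Ginv (cdf μ) u) (JG (cdf μ) (Ginv (cdf μ) u) u) x ∂μ := by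
      refine integral_congr_ae ?_
      filter_upwards [JG_ae_eq μ hu, JG_ae_eq μ hv] with x h1 h2
      rw [h1, h2]
      unfold stepFun
      split_ifs <;> first | (exfalso; linarith) | simp
    rw [hint, integral_stepFun, hcu, chi0, if_neg fun h' => h.ne h'.1]
    ring
  · rw [← h] at hcv
    have hint : ∫ x, JG (cdf μ) x u * JG (cdf μ) x v ∂μ
        = ∫ x, stepFun (Ginv (cdf μ) u)
          (JG (cdf μ) (Ginv (cdf μ) u) u * JG (cdf μ) (Ginv (cdf μ) u) v) x ∂μ := by
      refine integral_congr_ae ?_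
      filter_upwards [JG_ae_eq μ hu, JG_ae_eq μ hv] with x h1 h2
      rw [h1, h2, ← h]
      unfold stepFun
      split_ifs <;> simp
    rw [hint, integral_stepFun, ← mul_assoc, hcu, chi0, min_eq_left huv, max_eq_right huv]
    by_cases hj : 0 < jump (cdf μ) (Ginv (cdf μ) u)
    · rw [if_pos ⟨h, hj⟩, eq_div_of_mul_eq hj.ne' ((mul_comm _ _).trans hcv)]
      have hG : cdf μ (Ginv (cdf μ) u) = jump (cdf μ) (Ginv (cdf μ) u)
          + Function.leftLim (cdf μ) (Ginv (cdf μ) u) := by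
        unfold jump
        ring
      rw [hG]
      field_simp
      ring
    · -- without an atom at the quantile, `u = G(q-)` and the weight at `q` is irrelevant
      have hj0 := le_antisymm (not_lt.1 hj) (jump_nonneg μ (Ginv (cdf μ) u))
      rw [hj0, zero_mul] at hcu
      rw [if_neg fun h' => hj h'.2, ← hcu]
      linarith

end Quantile

lemma chi0_comm (G : ℝ → ℝ) (u v : ℝ) : chi0 G u v = chi0 G v u := by
  unfold chi0
  by_cases h : Ginv G u = Ginv G v
  · rw [h, min_comm, max_comm]
  · rw [if_neg fun hc => h hc.1, if_neg fun hc => h hc.1.symm]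

/-- If `X` is a real random variable with cdf `G`, then for all `u, v ∈ (0,1)`,
`E[J_G(X,u)·J_G(X,v)] = min(u,v) - χ_{0,G}(u,v)`, equivalently
`E[J_G(X,u)·J_G(X,v)] - uv = min(u,v) - uv - χ_{0,G}(u,v)`. -/
theorem stmt3 (μ : Measure ℝ) [IsProbabilityMeasure μ]
    (G : ℝ → ℝ) (hG : ∀ x, G x = (μ (Set.Iic x)).toReal) :
    ∀ u ∈ Set.Ioo (0:ℝ) 1, ∀ v ∈ Set.Ioo (0:ℝ) 1,
      (∫ x, JG G x u * JG G x v ∂μ) = min u v - chi0 G u v ∧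
      (∫ x, JG G x u * JG G x v ∂μ) - u * v = min u v - u * v - chi0 G u v := by
  obtain rfl : G = cdf μ := by
    funext x
    rw [hG, cdf_eq_real, Measure.real]
  intro u hu v hv
  have key : ∫ x, JG (cdf μ) x u * JG (cdf μ) x v ∂μ = min u v - chi0 (cdf μ) u v := by
    rcases le_total u v with h | h
    · rw [min_eq_left h, integral_JG_mul_of_le μ hu hv h]
    · rw [min_eq_right h, chi0_comm, ← integral_JG_mul_of_le μ hv hu h]
      simp only [mul_comm]
  refine ⟨key, ?_⟩
  rw [key]
  ring
end
end

section
/- Let T(u) = 1 − |2u − 1| denote the tent map on [0,1]. Then ∫₀¹ log(u)·log(T(u)) du = 2 − π²/12 + (log 2)²/2. Consequently, if U is uniformly distributed on (0,1) and V = T(U) (so that (U,V) has the Tent Map copula), the Savage dependence coefficient ρ_E = −1 + E[log(U)·log(V)] equals 1 − π²/12 + (log 2)²/2 ≈ 0.41776. -/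
/-!
The half `u < 1/2` of the integral becomes, with `t = 2u`, half of
`∫₀¹ (log t - log 2) log t dt = 2 + log 2`. The half `u > 1/2` becomes, with `t = 2 - 2u`, half of
`∫₀¹ log t · log (1 - t/2) dt`, whose integrand has an elementary antiderivative up to the
term `-2 Li₂(t/2)`; its value is `2 - log 2 - 2 Li₂(1/2)` (`integral_log_mul_log_one_sub`).

The value `Li₂(1/2) = π²/12 - (log 2)²/2` follows from Euler's reflection formula:
`Li₂(x) + Li₂(1 - x) + log x · log (1 - x)` has zero derivative on `(0, 1)`, and at `0` it takes the
value `Li₂(1) = ζ(2) = π²/6`.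

All integrands are nonnegative, so their integrability follows from the existence of an
antiderivative continuous up to the endpoints.
-/


open MeasureTheory ProbabilityTheory Filter Set

noncomputable section

open Topology

/-- The dilogarithm `Li₂(x) = ∑_{n ≥ 1} xⁿ / n²`, meaningful for `|x| ≤ 1`, where the series
converges; the sum is shifted to start at `n = 0`. -/
def dilog (x : ℝ) : ℝ := ∑' n : ℕ, x ^ (n + 1) / ((n : ℝ) + 1) ^ 2

lemma hasSum_one_div_succ_sq :
    HasSum (fun n : ℕ => 1 / ((n : ℝ) + 1) ^ 2) (Real.pi ^ 2 / 6) := by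
  have h := (hasSum_nat_add_iff' 1).mpr hasSum_zeta_two
  simpa using h

lemma dilog_zero : dilog 0 = 0 := by simp [dilog]

lemma dilog_one : dilog 1 = Real.pi ^ 2 / 6 := by
  simpa [dilog] using hasSum_one_div_succ_sq.tsum_eq

lemma continuousOn_dilog : ContinuousOn dilog (Icc 0 1) := by
  refine continuousOn_tsum (u := fun n : ℕ => 1 / ((n : ℝ) + 1) ^ 2) (fun n => by fun_prop)
    hasSum_one_div_succ_sq.summable fun n x hx => ?_
  rw [Real.norm_of_nonneg (div_nonneg (pow_nonneg hx.1 _) (by positivity))]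
  gcongr
  exact pow_le_one₀ hx.1 hx.2

lemma hasDerivAt_dilog {x : ℝ} (h0 : 0 < x) (h1 : x < 1) :
    HasDerivAt dilog (-Real.log (1 - x) / x) x := by
  obtain ⟨r, hxr, hr1⟩ := exists_between h1
  have hr0 : 0 < r := h0.trans hxr
  have key : HasDerivAt dilog (∑' n : ℕ, x ^ n / ((n : ℝ) + 1)) x := by
    refine hasDerivAt_tsum_of_isPreconnected (u := fun n : ℕ => r ^ n) (t := Ioo 0 r)
      (y₀ := x) (g' := fun (n : ℕ) (y : ℝ) => y ^ n / ((n : ℝ) + 1))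
      (summable_geometric_of_lt_one hr0.le hr1) isOpen_Ioo isPreconnected_Ioo ?_ ?_ ⟨h0, hxr⟩ ?_
      ⟨h0, hxr⟩
    · intro n y _
      have h := (hasDerivAt_pow (n + 1) y).div_const (((n : ℝ) + 1) ^ 2)
      convert! h using 1
      have : (n : ℝ) + 1 ≠ 0 := by positivity
      push_cast
      field_simp
    · intro n y hy
      rw [Real.norm_of_nonneg (div_nonneg (pow_nonneg hy.1.le _) (by positivity))]
      calc y ^ n / ((n : ℝ) + 1) ≤ y ^ n :=
            div_le_self (pow_nonneg hy.1.le _) (by linarith [Nat.cast_nonneg (α := ℝ) n])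
        _ ≤ r ^ n := pow_le_pow_left₀ hy.1.le hy.2.le _
    · refine Summable.of_nonneg_of_le (fun n => by positivity) (fun n => ?_)
        hasSum_one_div_succ_sq.summable
      gcongr
      exact pow_le_one₀ h0.le h1.le
  have hs := (Real.hasSum_pow_div_log_of_abs_lt_one (x := x) (by rwa [abs_of_pos h0])).div_const x
  convert key using 1
  rw [← hs.tsum_eq]
  refine tsum_congr fun n => ?_
  field_simp
  ring

/-- With the convention `log 0 = 0`, `log x · log (1 - c x)` is continuous at `0`, because
`log (1 - c x) = O(x)` and `x log x → 0`. -/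
lemma continuousAt_log_mul_log (c : ℝ) :
    ContinuousAt (fun x : ℝ => Real.log x * Real.log (1 - c * x)) 0 := by
  have hd : HasDerivAt (fun x : ℝ => Real.log (1 - c * x)) (-c) 0 := by
    have := (((hasDerivAt_id (0 : ℝ)).const_mul c).const_sub 1).log (by simp)
    simpa using this
  have hO := (Asymptotics.isBigO_refl Real.log (𝓝 0)).mul hd.isBigO_sub
  have ht : Tendsto (fun x : ℝ => Real.log x * (x - 0)) (𝓝 0) (𝓝 0) := by
    have := Real.continuous_mul_log.tendsto 0
    simpa [mul_comm] using this
  have := hO.trans_tendsto ht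
  simpa [ContinuousAt] using this

lemma continuousOn_log_mul_log {c : ℝ} {b : ℝ} (h : ∀ x ∈ Icc 0 b, c * x < 1) :
    ContinuousOn (fun x : ℝ => Real.log x * Real.log (1 - c * x)) (Icc 0 b) := by
  intro x hx
  rcases hx.1.eq_or_lt with rfl | h0
  · exact (continuousAt_log_mul_log c).continuousWithinAt
  · have h1 : 1 - c * x ≠ 0 := by linarith [h x hx]
    exact ((Real.continuousAt_log h0.ne').mul
      (ContinuousAt.log (by fun_prop) h1)).continuousWithinAt

lemma log_half : Real.log (1 / 2) = -Real.log 2 := by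
  rw [one_div, Real.log_inv]

/-- Euler's reflection formula for the dilogarithm, at the fixed point `1/2` of `x ↦ 1 - x`. -/
lemma dilog_half : dilog (1 / 2) = Real.pi ^ 2 / 12 - Real.log 2 ^ 2 / 2 := by
  have hcont : ContinuousOn
      (fun x : ℝ => dilog x + dilog (1 - x) + Real.log x * Real.log (1 - 1 * x))
      (Icc 0 (1 / 2)) := by
    refine ((continuousOn_dilog.mono (Icc_subset_Icc_right (by norm_num))).add
      (continuousOn_dilog.comp (by fun_prop) fun x hx => ?_)).add
      (continuousOn_log_mul_log fun x hx => ?_)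
    · constructor <;> linarith [hx.1, hx.2]
    · linarith [hx.2]
  have hderiv : ∀ x ∈ Ioo (0 : ℝ) (1 / 2), HasDerivAt
      (fun x : ℝ => dilog x + dilog (1 - x) + Real.log x * Real.log (1 - 1 * x)) 0 x := by
    intro x hx
    have h0 := hx.1
    have h1 : 0 < 1 - x := by linarith [hx.2]
    have d1 := hasDerivAt_dilog h0 (by linarith)
    have d2 := (hasDerivAt_dilog h1 (by linarith)).comp x ((hasDerivAt_id x).const_sub 1)
    have d3 := (Real.hasDerivAt_log h0.ne').mul
      ((((hasDerivAt_id x).const_mul 1).const_sub 1).log (by simpa using h1.ne'))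
    convert! (d1.add d2).add d3 using 1
    simp only [id, one_mul, sub_sub_cancel]
    have := h1.ne'
    field_simp
    ring
  have h := intervalIntegral.integral_eq_sub_of_hasDerivAt_of_le (by norm_num) hcont hderiv
    intervalIntegrable_const
  have e : (1 : ℝ) - 1 / 2 = 1 / 2 := by norm_num
  simp only [intervalIntegral.integral_zero, dilog_zero, dilog_one, sub_zero, Real.log_zero,
    one_mul, zero_mul, add_zero, zero_add, e, log_half] at h
  linarith

/-- A nonnegative derivative is integrable as soon as the primitive is continuous on the closed
interval, so the fundamental theorem of calculus holds. -/
lemma integral_of_nonneg_deriv {f F : ℝ → ℝ} {a b : ℝ} (hab : a ≤ b)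
    (hcont : ContinuousOn F (Icc a b)) (hderiv : ∀ x ∈ Ioo a b, HasDerivAt F (f x) x)
    (hpos : ∀ x ∈ Ioo a b, 0 ≤ f x) :
    IntervalIntegrable f volume a b ∧ ∫ x in a..b, f x = F b - F a := by
  have hi : IntervalIntegrable f volume a b :=
    (intervalIntegrable_iff_integrableOn_Ioc_of_le hab).2
      (intervalIntegral.integrableOn_deriv_of_nonneg hcont hderiv hpos)
  exact ⟨hi, intervalIntegral.integral_eq_sub_of_hasDerivAt_of_le hab hcont hderiv hi⟩

lemma continuousOn_mul_log_sq : ContinuousOn (fun x : ℝ => x * Real.log x ^ 2) (Icc 0 1) := by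
  have h : ContinuousOn (fun x : ℝ => 4 * (√x * Real.log √x) ^ 2) (Icc 0 1) := by
    have := Real.continuous_mul_log.comp Real.continuous_sqrt
    exact ((this.pow 2).const_mul 4).continuousOn
  refine h.congr fun x hx => ?_
  have := Real.sq_sqrt hx.1
  simp only [Real.log_sqrt hx.1, mul_pow, this]
  ring

/-- The contribution of the increasing branch of the tent map, after `t = 2u`. -/
lemma integral_log_sub_mul_log :
    IntervalIntegrable (fun t => Real.log (t / 2) * Real.log t) volume 0 1 ∧
      ∫ t in (0 : ℝ)..1, Real.log (t / 2) * Real.log t = 2 + Real.log 2 := by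
  have h := integral_of_nonneg_deriv (a := 0) (b := 1)
    (f := fun t => Real.log (t / 2) * Real.log t)
    (F := fun t => t * Real.log t ^ 2 - (2 + Real.log 2) * (t * Real.log t)
      + (2 + Real.log 2) * t) zero_le_one ?_ ?_ ?_
  · simpa using h
  · exact (continuousOn_mul_log_sq.sub
      (Real.continuous_mul_log.const_mul _).continuousOn).add (by fun_prop)
  · intro x hx
    have h0 := hx.1.ne'
    have d := Real.hasDerivAt_log h0
    have di := hasDerivAt_id x
    convert! ((di.mul (d.pow 2)).sub ((di.mul d).const_mul (2 + Real.log 2))).add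
      (di.const_mul (2 + Real.log 2)) using 1
    rw [Real.log_div h0 two_ne_zero]
    simp only [id]
    field_simp
    simp
    ring
  · intro x hx
    exact mul_nonneg_of_nonpos_of_nonpos
      (Real.log_nonpos (by linarith [hx.1]) (by linarith [hx.2]))
      (Real.log_nonpos hx.1.le hx.2.le)

/-- The contribution of the decreasing branch of the tent map, after `t = 2 - 2u`. -/
lemma integral_log_mul_log_one_sub :
    IntervalIntegrable (fun t => Real.log (1 - t / 2) * Real.log t) volume 0 1 ∧
      ∫ t in (0 : ℝ)..1, Real.log (1 - t / 2) * Real.log t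
        = 2 - Real.log 2 - 2 * dilog (1 / 2) := by
  have h := integral_of_nonneg_deriv (a := 0) (b := 1)
    (f := fun t => Real.log (1 - t / 2) * Real.log t)
    (F := fun t => (t * Real.log t - t + 2) * Real.log (1 - t / 2) - t * Real.log t + 2 * t
      - 2 * (Real.log t * Real.log (1 - 1 / 2 * t)) - 2 * dilog (t / 2)) zero_le_one ?_ ?_ ?_
  · refine ⟨h.1, h.2.trans ?_⟩
    have e : (1 : ℝ) - 1 / 2 = 1 / 2 := by norm_num
    simp only [e, log_half, Real.log_one, Real.log_zero, zero_div, dilog_zero]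
    simp
    ring
  · have c1 : ContinuousOn (fun t : ℝ => Real.log (1 - t / 2)) (Icc 0 1) :=
      ContinuousOn.log (by fun_prop) fun x hx => by linarith [hx.2]
    have c2 := (Real.continuous_mul_log).continuousOn (s := Icc 0 1)
    have c3 : ContinuousOn (fun t : ℝ => dilog (t / 2)) (Icc 0 1) :=
      continuousOn_dilog.comp (by fun_prop) fun x hx => by
        constructor <;> linarith [hx.1, hx.2]
    have c4 := continuousOn_log_mul_log (c := 1 / 2) (b := 1) fun x hx => by linarith [hx.2]
    exact ((((((c2.sub continuousOn_id).add continuousOn_const).mul c1).sub c2).add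
      (continuousOn_id.const_mul 2)).sub (c4.const_mul 2)).sub (c3.const_mul 2)
  · intro x hx
    have h0 := hx.1.ne'
    have h1 : 1 - x / 2 ≠ 0 := by linarith [hx.2]
    have h2 : 2 - x ≠ 0 := by linarith [hx.2]
    have ehalf : 1 - 1 / 2 * x = 1 - x / 2 := by ring
    have d := Real.hasDerivAt_log h0
    have di := hasDerivAt_id x
    have dl := ((di.div_const 2).const_sub 1).log h1
    have dl' := ((di.const_mul (1 / 2)).const_sub 1).log
      (show 1 - 1 / 2 * x ≠ 0 by rwa [ehalf])
    have dd := (hasDerivAt_dilog (x := x / 2) (by linarith [hx.1]) (by linarith [hx.2])).comp x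
      (di.div_const 2)
    convert! ((((((((di.mul d).sub di).add_const 2).mul dl).sub (di.mul d)).add
      (di.const_mul 2)).sub ((d.mul dl').const_mul 2)).sub (dd.const_mul 2)) using 1
    simp only [id, ehalf, Pi.mul_apply, Pi.sub_apply]
    field_simp
    ring
  · intro x hx
    exact mul_nonneg_of_nonpos_of_nonpos
      (Real.log_nonpos (by linarith [hx.2]) (by linarith [hx.1]))
      (Real.log_nonpos hx.1.le hx.2.le)

lemma integral_log_mul_log_tent :
    (∫ u in Set.Ioo (0:ℝ) 1, Real.log u * Real.log (1 - |2 * u - 1|))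
      = 2 - Real.pi ^ 2 / 12 + (Real.log 2) ^ 2 / 2 := by
  obtain ⟨i1, v1⟩ := integral_log_sub_mul_log
  obtain ⟨i2, v2⟩ := integral_log_mul_log_one_sub
  have e1 : EqOn (fun u : ℝ => Real.log (2 * u / 2) * Real.log (2 * u))
      (fun u => Real.log u * Real.log (1 - |2 * u - 1|)) (uIcc 0 (1 / 2)) := by
    intro u hu
    rw [uIcc_of_le (by norm_num)] at hu
    have : |2 * u - 1| = 1 - 2 * u := by rw [abs_of_nonpos] <;> linarith [hu.2]
    simp only [this]
    congr 2 <;> ring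
  have e2 : EqOn (fun u : ℝ => Real.log (1 - (2 - 2 * u) / 2) * Real.log (2 - 2 * u))
      (fun u => Real.log u * Real.log (1 - |2 * u - 1|)) (uIcc (1 / 2) 1) := by
    intro u hu
    rw [uIcc_of_le (by norm_num)] at hu
    have : |2 * u - 1| = 2 * u - 1 := by rw [abs_of_nonneg]; linarith [hu.1]
    simp only [this]
    congr 2 <;> ring
  have j1 : IntervalIntegrable (fun u : ℝ => Real.log (2 * u / 2) * Real.log (2 * u))
      volume 0 (1 / 2) := by
    simpa using i1.comp_mul_left (c := 2)
  have j2 : IntervalIntegrable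
      (fun u : ℝ => Real.log (1 - (2 - 2 * u) / 2) * Real.log (2 - 2 * u))
      volume (1 / 2) 1 := by
    have := (i2.comp_sub_left 2).comp_mul_left (c := 2)
    norm_num at this
    exact this.symm
  have w1 := intervalIntegral.integral_comp_mul_left (a := 0) (b := 1 / 2)
    (fun t => Real.log (t / 2) * Real.log t) (two_ne_zero (α := ℝ))
  have w2 := intervalIntegral.integral_comp_sub_mul (a := 1 / 2) (b := 1)
    (fun t => Real.log (1 - t / 2) * Real.log t) (two_ne_zero (α := ℝ)) 2
  norm_num only [mul_zero, smul_eq_mul] at w1 w2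
  rw [v1] at w1
  rw [v2, dilog_half] at w2
  rw [← integral_Ioc_eq_integral_Ioo, ← intervalIntegral.integral_of_le zero_le_one,
    ← intervalIntegral.integral_add_adjacent_intervals
      (j1.congr (e1.mono uIoc_subset_uIcc)) (j2.congr (e2.mono uIoc_subset_uIcc)),
    ← intervalIntegral.integral_congr e1, ← intervalIntegral.integral_congr e2, w1, w2]
  ring

/-- For the tent map `T(u) = 1 - |2u - 1|`,
`∫₀¹ log(u)·log(T(u)) du = 2 - π²/12 + (log 2)²/2`. Consequently, if `U` is uniform on
`(0,1)` and `V = T(U)`, the Savage coefficient `ρ_E = -1 + E[log(U)·log(V)]` equals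
`1 - π²/12 + (log 2)²/2`. -/
theorem stmt11 {Ω : Type*} [MeasurableSpace Ω] (P : Measure Ω) [IsProbabilityMeasure P]
    (U : Ω → ℝ) (hU : Measurable U)
    (hUunif : Measure.map U P = volume.restrict (Set.Ioo (0:ℝ) 1)) :
    (∫ u in Set.Ioo (0:ℝ) 1, Real.log u * Real.log (1 - |2 * u - 1|))
        = 2 - Real.pi ^ 2 / 12 + (Real.log 2) ^ 2 / 2 ∧
    -1 + (∫ ω, Real.log (U ω) * Real.log (1 - |2 * U ω - 1|) ∂P)
        = 1 - Real.pi ^ 2 / 12 + (Real.log 2) ^ 2 / 2 := by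
  refine ⟨integral_log_mul_log_tent, ?_⟩
  have hmeas : Measurable fun u : ℝ => Real.log u * Real.log (1 - |2 * u - 1|) :=
    Real.measurable_log.mul (Real.measurable_log.comp
      (Continuous.measurable (by fun_prop)))
  have hmap := integral_map (μ := P) hU.aemeasurable
    (f := fun u : ℝ => Real.log u * Real.log (1 - |2 * u - 1|)) hmeas.aestronglyMeasurable
  rw [← hmap, hUunif, integral_log_mul_log_tent]
  ring
end
end

section
/- Let T(u) = 1 − |2u − 1| denote the tent map on [0,1]. Then ∫₀¹ log(1 − u)·log(|2u − 1|) du = 2 − π²/8. Consequently, if U is uniformly distributed on (0,1) and V = T(U), the classical Savage coefficient ρ_E = −1 + E[log(1 − U)·log(1 − V)] equals 1 − π²/8 ≈ −0.2337. -/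
/-!
With `x = 2u - 1`, and then folding `(-1, 0)` onto `(0, 1)`, the integral becomes
`½ ∫₀¹ log (1 - x²) log x dx + log 2`. Expanding `-log (1 - x²) = ∑ x ^ (2n) / n` and integrating
against `1 + log x`, rather than `log x`, gives the series `∑_{n ≥ 1} 2 / (2n + 1)² = π² / 4 - 2`
(`integral_log_one_sub_sq_mul`); the remaining `∫₀¹ log (1 - x²) dx = 2 log 2 - 2` is elementary.
The Savage coefficient follows by transporting the expectation to the law of `U`.
-/

open MeasureTheory ProbabilityTheory Filter Set

noncomputable section

/-- The antiderivative is continuous at `0` because `x * log x` is. -/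
lemma integral_pow_mul_log (m : ℕ) :
    ∫ x in (0:ℝ)..1, x ^ m * Real.log x = -1 / ((m:ℝ) + 1) ^ 2 := by
  have hm : (m:ℝ) + 1 ≠ 0 := by positivity
  have hint : IntervalIntegrable (fun x : ℝ => x ^ m * Real.log x) volume 0 1 :=
    intervalIntegral.intervalIntegrable_log'.continuousOn_mul (by fun_prop)
  rw [intervalIntegral.integral_eq_sub_of_hasDerivAt_of_le (a := 0) (b := 1)
    (f := fun x : ℝ => x ^ m * (x * Real.log x) / (m + 1) - x ^ (m + 1) / ((m:ℝ) + 1) ^ 2)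
    zero_le_one ?_ ?_ hint]
  · simp
    ring
  · have := Real.continuous_mul_log
    exact Continuous.continuousOn (by fun_prop)
  · intro x hx
    have h0 : x ≠ 0 := hx.1.ne'
    have h1 := (((hasDerivAt_pow (m + 1) x).mul (Real.hasDerivAt_log h0)).div_const
      ((m:ℝ) + 1)).sub ((hasDerivAt_pow (m + 1) x).div_const (((m:ℝ) + 1) ^ 2))
    refine (h1.congr_of_eventuallyEq ?_).congr_deriv ?_
    · refine Eventually.of_forall fun y => ?_
      simp [pow_succ, mul_assoc]
    · push_cast
      field_simp
      ring

lemma intervalIntegrable_pow_mul_log (m : ℕ) (c : ℝ) :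
    IntervalIntegrable (fun x : ℝ => x ^ m * (1 + c * Real.log x)) volume 0 1 :=
  (intervalIntegrable_const.add
    (intervalIntegral.intervalIntegrable_log'.const_mul c)).continuousOn_mul (by fun_prop)

lemma integral_pow_mul_one_add_log (m : ℕ) (c : ℝ) :
    ∫ x in (0:ℝ)..1, x ^ m * (1 + c * Real.log x)
      = 1 / ((m:ℝ) + 1) - c / ((m:ℝ) + 1) ^ 2 := by
  have h : ∀ x : ℝ, x ^ m * (1 + c * Real.log x) = x ^ m + c * (x ^ m * Real.log x) := by
    intro x; ring
  simp_rw [h]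
  rw [intervalIntegral.integral_add (by simp)
    ((intervalIntegral.intervalIntegrable_log'.continuousOn_mul (by fun_prop)).const_mul c),
    intervalIntegral.integral_const_mul, integral_pow_mul_log, integral_pow]
  simp
  ring

/-- Twice the sum of the inverse squares of the odd integers `≥ 3`, from `ζ(2) = π² / 6`. -/
lemma hasSum_odd_sq : HasSum (fun n : ℕ => 2 / (2 * (n:ℝ) + 3) ^ 2) (Real.pi ^ 2 / 4 - 2) := by
  have hz := hasSum_zeta_two
  have he : HasSum (fun n : ℕ => 1 / (((2 * n : ℕ) : ℝ)) ^ 2) (Real.pi ^ 2 / 24) := by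
    rw [show Real.pi ^ 2 / 24 = 1 / 4 * (Real.pi ^ 2 / 6) by ring]
    refine Eq.subst (motive := fun f => HasSum f _) (funext fun n => ?_) (hz.mul_left (1 / 4))
    push_cast
    rw [mul_pow, one_div_mul_one_div]
    norm_num
  have ho : Summable (fun n : ℕ => 1 / (((2 * n + 1 : ℕ) : ℝ)) ^ 2) :=
    hz.summable.comp_injective (i := fun n : ℕ => 2 * n + 1) (fun a b h => by
      simp only at h; omega)
  have hsum := (HasSum.even_add_odd (f := fun n : ℕ => 1 / (n:ℝ) ^ 2) he ho.hasSum).unique hz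
  have h8 : HasSum (fun n : ℕ => 1 / (((2 * n + 1 : ℕ) : ℝ)) ^ 2) (Real.pi ^ 2 / 8) := by
    convert ho.hasSum using 1
    linarith
  have h9 := ((hasSum_nat_add_iff' 1).mpr h8).mul_left 2
  rw [show 2 * (Real.pi ^ 2 / 8 - ∑ i ∈ Finset.range 1, 1 / (((2 * i + 1 : ℕ) : ℝ)) ^ 2)
    = Real.pi ^ 2 / 4 - 2 by simp; ring] at h9
  refine Eq.subst (motive := fun f => HasSum f _) (funext fun n => ?_) h9
  push_cast
  ring

/-- The weight `1 + log x` cancels the factor `1 / n` of the logarithmic series: termwise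
integration gives `∫₀¹ x ^ (2n) / n * (1 + log x) = 2 / (2n + 1) ^ 2`. -/
lemma integral_log_one_sub_sq_mul :
    ∫ x in Ioo (0:ℝ) 1, -Real.log (1 - x ^ 2) * (1 + Real.log x) = Real.pi ^ 2 / 4 - 2 := by
  set F : ℕ → ℝ → ℝ := fun n x => (x ^ 2) ^ (n + 1) / ((n:ℝ) + 1) * (1 + Real.log x) with hF
  have hFc : ∀ (n : ℕ) (c : ℝ), (fun x : ℝ => (x ^ 2) ^ (n + 1) / ((n:ℝ) + 1) *
      (1 + c * Real.log x))
      = fun x => (1 / ((n:ℝ) + 1)) * (x ^ (2 * n + 2) * (1 + c * Real.log x)) := by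
    intro n c; ext x; ring
  have hI : ∀ (n : ℕ) (c : ℝ), IntegrableOn (fun x : ℝ => (x ^ 2) ^ (n + 1) / ((n:ℝ) + 1) *
      (1 + c * Real.log x)) (Ioo 0 1) := by
    intro n c
    rw [hFc]
    exact ((intervalIntegrable_iff_integrableOn_Ioo_of_le zero_le_one).1
      ((intervalIntegrable_pow_mul_log (2 * n + 2) c).const_mul _))
  have hV : ∀ (n : ℕ) (c : ℝ), ∫ x in Ioo (0:ℝ) 1, (x ^ 2) ^ (n + 1) / ((n:ℝ) + 1) *
      (1 + c * Real.log x)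
      = 1 / ((n:ℝ) + 1) * (1 / (2 * (n:ℝ) + 3) - c / (2 * (n:ℝ) + 3) ^ 2) := by
    intro n c
    rw [hFc, ← integral_Ioc_eq_integral_Ioo, ← intervalIntegral.integral_of_le zero_le_one,
      intervalIntegral.integral_const_mul, integral_pow_mul_one_add_log]
    push_cast
    ring
  have hF1 : ∀ n, F n = fun x : ℝ => (x ^ 2) ^ (n + 1) / ((n:ℝ) + 1) *
      (1 + 1 * Real.log x) := by
    intro n; simp [hF]
  have hFi : ∀ n, Integrable (F n) (volume.restrict (Ioo 0 1)) := by
    intro n; rw [hF1]; exact hI n 1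
  have hFv : ∀ n, ∫ x in Ioo (0:ℝ) 1, F n x = 2 / (2 * (n:ℝ) + 3) ^ 2 := by
    intro n
    rw [hF1, hV]
    field_simp
    ring
  -- On `(0, 1)`, `|1 + log x| ≤ 1 - log x`, and the latter integrates explicitly.
  have hFn : ∀ n, ∫ x in Ioo (0:ℝ) 1, ‖F n x‖ ≤ 1 / ((n:ℝ) + 1) ^ 2 := by
    intro n
    calc ∫ x in Ioo (0:ℝ) 1, ‖F n x‖
        ≤ ∫ x in Ioo (0:ℝ) 1, (x ^ 2) ^ (n + 1) / ((n:ℝ) + 1) * (1 + (-1) * Real.log x) := by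
          refine setIntegral_mono_on (hFi n).norm (hI n (-1)) measurableSet_Ioo fun x hx => ?_
          have hl : Real.log x ≤ 0 := Real.log_nonpos hx.1.le hx.2.le
          have hp : 0 ≤ (x ^ 2) ^ (n + 1) / ((n:ℝ) + 1) := by positivity
          simp only [hF, norm_mul, Real.norm_eq_abs, abs_of_nonneg hp]
          refine mul_le_mul_of_nonneg_left ?_ hp
          rw [abs_le]
          constructor <;> linarith
      _ ≤ 1 / ((n:ℝ) + 1) ^ 2 := by
          rw [hV, sq ((n:ℝ) + 1), ← one_div_mul_one_div]
          refine mul_le_mul_of_nonneg_left ?_ (by positivity)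
          have hn : (0:ℝ) ≤ n := n.cast_nonneg
          rw [div_sub_div _ _ (by positivity) (by positivity),
            div_le_div_iff₀ (by positivity) (by positivity)]
          nlinarith [mul_nonneg hn hn, mul_nonneg (mul_nonneg hn hn) hn]
  have hS : Summable fun n => ∫ x in Ioo (0:ℝ) 1, ‖F n x‖ := by
    refine Summable.of_nonneg_of_le (fun n => integral_nonneg fun x => norm_nonneg _) hFn ?_
    have := (summable_nat_add_iff 1).mpr hasSum_zeta_two.summable
    simpa using this
  have h1 := hasSum_integral_of_summable_integral_norm hFi hS
  simp_rw [hFv] at h1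
  rw [hasSum_odd_sq.unique h1]
  refine setIntegral_congr_fun measurableSet_Ioo fun x hx => Eq.symm ?_
  have hx2 : |x ^ 2| < 1 := by
    rw [abs_of_nonneg (sq_nonneg x)]
    nlinarith [hx.1, hx.2]
  exact ((Real.hasSum_pow_div_log_of_abs_lt_one hx2).mul_right (1 + Real.log x)).tsum_eq

lemma savage_integral :
    (∫ u in Ioo (0:ℝ) 1, Real.log (1 - u) * Real.log |2 * u - 1|)
      = 2 - Real.pi ^ 2 / 8 := by
  have hlog : IntervalIntegrable Real.log volume 0 1 := intervalIntegral.intervalIntegrable_log'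
  have hlm : IntervalIntegrable (fun x => Real.log (1 - x)) volume 0 1 := by
    simpa using (hlog.comp_sub_left 1).symm
  have hlpc : ContinuousOn (fun x : ℝ => Real.log (1 + x)) (uIcc 0 1) := by
    rw [uIcc_of_le zero_le_one]
    exact ContinuousOn.log (by fun_prop) fun x hx => by linarith [hx.1]
  have hlp : IntervalIntegrable (fun x => Real.log (1 + x)) volume 0 1 :=
    hlpc.intervalIntegrable
  have hllp : IntervalIntegrable (fun x => Real.log (1 + x) * Real.log x) volume 0 1 :=
    hlog.continuousOn_mul hlpc
  have hG : ∫ x in (0:ℝ)..1, -Real.log (1 - x ^ 2) * (1 + Real.log x)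
      = Real.pi ^ 2 / 4 - 2 := by
    rw [intervalIntegral.integral_of_le zero_le_one, integral_Ioc_eq_integral_Ioo,
      integral_log_one_sub_sq_mul]
  -- A nonzero Bochner integral certifies integrability.
  have hGi : IntervalIntegrable (fun x => -Real.log (1 - x ^ 2) * (1 + Real.log x))
      volume 0 1 := by
    by_contra h
    rw [intervalIntegral.integral_undef h] at hG
    nlinarith [Real.pi_gt_three]
  have hsplit : ∀ x ∈ Ioo (0:ℝ) 1, Real.log (1 - x ^ 2) = Real.log (1 - x) + Real.log (1 + x) := by
    intro x hx
    rw [← Real.log_mul (by linarith [hx.2]) (by linarith [hx.1])]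
    ring_nf
  have hllm : IntervalIntegrable (fun x => Real.log (1 - x) * Real.log x) volume 0 1 := by
    refine (((hGi.neg.sub hlm).sub hlp).sub hllp).congr_uIoo fun x hx => ?_
    rw [uIoo_of_le zero_le_one] at hx
    simp only [Pi.neg_apply, hsplit x hx]
    ring
  have hGv : (∫ x in (0:ℝ)..1, Real.log (1 - x) * Real.log x)
      + (∫ x in (0:ℝ)..1, Real.log (1 + x) * Real.log x)
      = 2 - Real.pi ^ 2 / 4 - (∫ x in (0:ℝ)..1, Real.log (1 - x))
        - (∫ x in (0:ℝ)..1, Real.log (1 + x)) := by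
    rw [← intervalIntegral.integral_add hllm hllp]
    have : 2 - Real.pi ^ 2 / 4
        = ∫ x in (0:ℝ)..1, -(-Real.log (1 - x ^ 2) * (1 + Real.log x)) := by
      rw [intervalIntegral.integral_neg, hG]; ring
    have hGn : IntervalIntegrable (fun x => -(-Real.log (1 - x ^ 2) * (1 + Real.log x)))
        volume 0 1 := hGi.neg
    rw [this, ← intervalIntegral.integral_sub hGn hlm,
      ← intervalIntegral.integral_sub (hGn.sub hlm) hlp]
    refine intervalIntegral.integral_congr_uIoo fun x hx => ?_
    rw [uIoo_of_le zero_le_one] at hx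
    simp only [hsplit x hx]
    ring
  have hm : ∫ x in (0:ℝ)..1, Real.log (1 - x) = -1 := by
    rw [intervalIntegral.integral_comp_sub_left (fun x => Real.log x) 1]
    simp
  have hp : ∫ x in (0:ℝ)..1, Real.log (1 + x) = 2 * Real.log 2 - 1 := by
    rw [intervalIntegral.integral_comp_add_left (fun x => Real.log x) 1, integral_log]
    norm_num
    ring
  have h0 : ∫ x in (0:ℝ)..1, Real.log x = -1 := by simp
  have e1 : ∀ x ∈ Ioo (0:ℝ) 1, Real.log (1 - x) * Real.log x - Real.log 2 * Real.log x
      = Real.log ((1 - x) / 2) * Real.log x := by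
    intro x hx
    rw [Real.log_div (by linarith [hx.2]) two_ne_zero]
    ring
  have e2 : ∀ x ∈ Ioo (0:ℝ) 1, Real.log (1 + x) * Real.log x - Real.log 2 * Real.log x
      = Real.log ((1 - -x) / 2) * Real.log (-x) := by
    intro x hx
    rw [Real.log_neg_eq_log, sub_neg_eq_add, Real.log_div (by linarith [hx.1]) two_ne_zero]
    ring
  have i1 : IntervalIntegrable (fun x => Real.log ((1 - x) / 2) * Real.log x) volume 0 1 :=
    (hllm.sub (hlog.const_mul (Real.log 2))).congr_uIoo fun x hx =>
      e1 x (by rwa [uIoo_of_le zero_le_one] at hx)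
  have i2 : IntervalIntegrable (fun x => Real.log ((1 - -x) / 2) * Real.log (-x)) volume 0 1 :=
    (hllp.sub (hlog.const_mul (Real.log 2))).congr_uIoo fun x hx =>
      e2 x (by rwa [uIoo_of_le zero_le_one] at hx)
  have i3 : IntervalIntegrable (fun x => Real.log ((1 - x) / 2) * Real.log x) volume (-1) 0 := by
    have := (i2.comp_sub_left 0).symm
    simpa using this
  have v1 : ∫ x in (0:ℝ)..1, Real.log ((1 - x) / 2) * Real.log x
      = (∫ x in (0:ℝ)..1, Real.log (1 - x) * Real.log x) + Real.log 2 := by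
    rw [← intervalIntegral.integral_congr_uIoo (f := fun x => Real.log (1 - x) * Real.log x
      - Real.log 2 * Real.log x) (fun x hx => e1 x (by rwa [uIoo_of_le zero_le_one] at hx)),
      intervalIntegral.integral_sub hllm (hlog.const_mul _),
      intervalIntegral.integral_const_mul, h0]
    ring
  have v2 : ∫ x in (-1:ℝ)..0, Real.log ((1 - x) / 2) * Real.log x
      = (∫ x in (0:ℝ)..1, Real.log (1 + x) * Real.log x) + Real.log 2 := by
    have := intervalIntegral.integral_comp_neg (a := 0) (b := 1)
      (fun x => Real.log ((1 - x) / 2) * Real.log x)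
    rw [neg_zero] at this
    rw [← this, ← intervalIntegral.integral_congr_uIoo (f := fun x =>
      Real.log (1 + x) * Real.log x
      - Real.log 2 * Real.log x) (fun x hx => e2 x (by rwa [uIoo_of_le zero_le_one] at hx)),
      intervalIntegral.integral_sub hllp (hlog.const_mul _),
      intervalIntegral.integral_const_mul, h0]
    ring
  have hsub := intervalIntegral.integral_comp_mul_sub (a := 0) (b := 1)
    (fun x => Real.log ((1 - x) / 2) * Real.log x) (two_ne_zero (α := ℝ)) 1
  have hb : (2:ℝ) * 1 - 1 = 1 := by norm_num
  have ha : (2:ℝ) * 0 - 1 = -1 := by norm_num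
  rw [ha, hb, ← intervalIntegral.integral_add_adjacent_intervals i3 i1, v1, v2] at hsub
  rw [← integral_Ioc_eq_integral_Ioo, ← intervalIntegral.integral_of_le zero_le_one]
  have hc : ∀ u : ℝ, Real.log (1 - u) * Real.log |2 * u - 1|
      = Real.log ((1 - (2 * u - 1)) / 2) * Real.log (2 * u - 1) := by
    intro u
    rw [Real.log_abs]
    congr 2
    ring
  simp_rw [hc]
  rw [hsub, smul_eq_mul]
  rw [hm, hp] at hGv
  linarith

/-- For the tent map `T(u) = 1 - |2u - 1|` (so `1 - T(u) = |2u - 1|`),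
`∫₀¹ log(1-u)·log(|2u-1|) du = 2 - π²/8`. Consequently, if `U` is uniform on `(0,1)`
and `V = T(U)`, the classical Savage coefficient `ρ_E = -1 + E[log(1-U)·log(1-V)]`
equals `1 - π²/8`. -/
theorem stmt12 {Ω : Type*} [MeasurableSpace Ω] (P : Measure Ω) [IsProbabilityMeasure P]
    (U : Ω → ℝ) (hU : Measurable U)
    (hUunif : Measure.map U P = volume.restrict (Set.Ioo (0:ℝ) 1)) :
    (∫ u in Set.Ioo (0:ℝ) 1, Real.log (1 - u) * Real.log |2 * u - 1|)
        = 2 - Real.pi ^ 2 / 8 ∧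
    -1 + (∫ ω, Real.log (1 - U ω) * Real.log (1 - (1 - |2 * U ω - 1|)) ∂P)
        = 1 - Real.pi ^ 2 / 8 := by
  refine ⟨savage_integral, ?_⟩
  have h := integral_map (μ := P) hU.aemeasurable
    (f := fun u : ℝ => Real.log (1 - u) * Real.log |2 * u - 1|)
    (Measurable.aestronglyMeasurable (by fun_prop))
  rw [hUunif, savage_integral] at h
  simp only [sub_sub_cancel]
  rw [← h]
  ring
end
end

section
/- Let U and V be independent random variables uniformly distributed on (0,1), let T(u) = 1 − |2u − 1| be the tent map, fix p ∈ (0,1), and define U* = p·V if U ≤ p and U* = p + (1 − p)·V if U > p. Then the Spearman-type coefficient ρ_S = 12·E[ (U* − 1/2)·(T(U) − 1/2) ] satisfies: ρ_S = 6p(1/2 − p) if 0 < p ≤ 1/2, and ρ_S = −6(1 − p)(p − 1/2) if 1/2 ≤ p < 1. In particular ρ_S = 0 when p = 1/2. -/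
/-!
Write `t u = T(u) - 1/2` for the centred tent map. Conditionally on `U` the factor `U* - 1/2` is
affine in `V`, so by independence and `E[V] = 1/2` it may be replaced by its conditional mean, the
step function equal to `(p - 1)/2` on `U ≤ p` and to `p/2` on `U > p`. Hence the expectation is
`(p - 1)/2 * A + p/2 * B` with `A = ∫₀ᵖ t` and `B = ∫ₚ¹ t`. Since `A + B = 0`, Spearman's rho is
`-6 A`, and `A` is elementary on each side of the kink of `T` at `1/2`.

The reduction to `-6 A` is `rho_eq_integral`; the two branches of the tent map are integrated in
`integral_tent_left` and `integral_tent_right`.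
-/

open MeasureTheory ProbabilityTheory Filter Set

noncomputable section

theorem stepMul_intervalIntegrable (t : ℝ → ℝ) (ht : Continuous t) (p α β a b : ℝ) :
    IntervalIntegrable (fun u => (if u ≤ p then α else β) * t u) volume a b := by
  have h : (fun u => (if u ≤ p then α else β) * t u)
      = (Set.Iic p).piecewise (fun u => α * t u) (fun u => β * t u) := by
    funext u
    by_cases hu : u ≤ p <;> simp [Set.piecewise, hu]
  have hc : ∀ c : ℝ, IntervalIntegrable (fun u => c * t u) volume a b := fun c =>
    (continuous_const.mul ht).intervalIntegrable a b
  rw [h]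
  exact ⟨Integrable.piecewise measurableSet_Iic (hc α).1.integrableOn (hc β).1.integrableOn,
    Integrable.piecewise measurableSet_Iic (hc α).2.integrableOn (hc β).2.integrableOn⟩

theorem stepMul_integrable (t : ℝ → ℝ) (ht : Continuous t) (p α β : ℝ) :
    Integrable (fun u => (if u ≤ p then α else β) * t u)
      (volume.restrict (Set.Ioo (0 : ℝ) 1)) :=
  ((intervalIntegrable_iff_integrableOn_Ioo_of_le zero_le_one).1
    (stepMul_intervalIntegrable t ht p α β 0 1))

theorem integral_step_mul (t : ℝ → ℝ) (ht : Continuous t) (p α β : ℝ)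
    (hp : p ∈ Set.Ioo (0 : ℝ) 1) :
    ∫ u in Set.Ioo (0 : ℝ) 1, (if u ≤ p then α else β) * t u
      = α * (∫ u in (0 : ℝ)..p, t u) + β * ∫ u in p..1, t u := by
  rw [← integral_Ioc_eq_integral_Ioo, ← intervalIntegral.integral_of_le zero_le_one,
    ← intervalIntegral.integral_add_adjacent_intervals
      (stepMul_intervalIntegrable t ht p α β 0 p) (stepMul_intervalIntegrable t ht p α β p 1),
    ← intervalIntegral.integral_const_mul, ← intervalIntegral.integral_const_mul]
  congr 1
  · rw [intervalIntegral.integral_of_le hp.1.le, intervalIntegral.integral_of_le hp.1.le]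
    refine setIntegral_congr_fun measurableSet_Ioc fun u hu => ?_
    simp [hu.2]
  · rw [intervalIntegral.integral_of_le hp.2.le, intervalIntegral.integral_of_le hp.2.le]
    refine setIntegral_congr_fun measurableSet_Ioc fun u hu => ?_
    simp [not_le.2 hu.1]

theorem integral_tent_left (a b : ℝ) (hab : a ≤ b) (hb : b ≤ 1 / 2) :
    ∫ u in a..b, ((1 - |2 * u - 1|) - 1 / 2) = b ^ 2 - b / 2 - (a ^ 2 - a / 2) := by
  have h : ∫ u in a..b, ((1 - |2 * u - 1|) - 1 / 2) = ∫ u in a..b, (2 * u - 1 / 2) := by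
    refine intervalIntegral.integral_congr fun u hu => ?_
    rw [Set.uIcc_of_le hab] at hu
    have := abs_of_nonpos (show 2 * u - 1 ≤ 0 by linarith [hu.2])
    simp only [this]
    ring
  rw [h, intervalIntegral.integral_sub (Continuous.intervalIntegrable (by fun_prop) _ _)
    (Continuous.intervalIntegrable (by fun_prop) _ _), intervalIntegral.integral_const_mul,
    integral_id, intervalIntegral.integral_const, smul_eq_mul]
  ring

theorem integral_tent_right (a b : ℝ) (hab : a ≤ b) (ha : 1 / 2 ≤ a) :
    ∫ u in a..b, ((1 - |2 * u - 1|) - 1 / 2) = 3 / 2 * b - b ^ 2 - (3 / 2 * a - a ^ 2) := by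
  have h : ∫ u in a..b, ((1 - |2 * u - 1|) - 1 / 2) = ∫ u in a..b, (3 / 2 - 2 * u) := by
    refine intervalIntegral.integral_congr fun u hu => ?_
    rw [Set.uIcc_of_le hab] at hu
    have := abs_of_nonneg (show 0 ≤ 2 * u - 1 by linarith [hu.1])
    simp only [this]
    ring
  rw [h, intervalIntegral.integral_sub (Continuous.intervalIntegrable (by fun_prop) _ _)
    (Continuous.intervalIntegrable (by fun_prop) _ _), intervalIntegral.integral_const_mul,
    integral_id, intervalIntegral.integral_const, smul_eq_mul]
  ring

/-- The centred tent map has mean zero on `(0, 1)`. -/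
theorem integral_tent_total :
    ∫ u in (0 : ℝ)..1, ((1 - |2 * u - 1|) - 1 / 2) = 0 := by
  rw [← intervalIntegral.integral_add_adjacent_intervals (b := 1 / 2)
    (Continuous.intervalIntegrable (by fun_prop) _ _)
    (Continuous.intervalIntegrable (by fun_prop) _ _),
    integral_tent_left _ _ (by norm_num) le_rfl, integral_tent_right _ _ (by norm_num) le_rfl]
  norm_num

/-- Independence, `E[V] = 1/2` and the vanishing mean of the centred tent map reduce Spearman's
rho to a one-dimensional integral over `(0, p)`. -/
theorem rho_eq_integral {Ω : Type*} [MeasurableSpace Ω] (P : Measure Ω)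
    [IsProbabilityMeasure P]
    (U V : Ω → ℝ) (hU : Measurable U) (hV : Measurable V)
    (hUunif : Measure.map U P = volume.restrict (Set.Ioo (0:ℝ) 1))
    (hVunif : Measure.map V P = volume.restrict (Set.Ioo (0:ℝ) 1))
    (hindep : IndepFun U V P)
    (p : ℝ) (hp : p ∈ Set.Ioo (0:ℝ) 1) :
    12 * (∫ ω, ((if U ω ≤ p then p * V ω else p + (1 - p) * V ω) - 1/2)
              * ((1 - |2 * U ω - 1|) - 1/2) ∂P)
      = -6 * ∫ u in (0 : ℝ)..p, ((1 - |2 * u - 1|) - 1 / 2) := by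
  set t : ℝ → ℝ := fun u => (1 - |2 * u - 1|) - 1 / 2 with ht_def
  have ht : Continuous t := by fun_prop
  -- `U* - 1/2 = a(U) + b(U) V` with step functions `a` and `b`; here `f = a t` and `g = b t`.
  let f : ℝ → ℝ := fun u => (if u ≤ p then -1 / 2 else p - 1 / 2) * t u
  let g : ℝ → ℝ := fun u => (if u ≤ p then p else 1 - p) * t u
  have hf : Integrable f (Measure.map U P) := hUunif ▸ stepMul_integrable t ht p _ _
  have hg : Integrable g (Measure.map U P) := hUunif ▸ stepMul_integrable t ht p _ _
  have hgm : Measurable g :=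
    (Measurable.ite measurableSet_Iic measurable_const measurable_const).mul ht.measurable
  have hfU : Integrable (fun ω => f (U ω)) P := hf.comp_measurable hU
  have hgU : Integrable (fun ω => g (U ω)) P := hg.comp_measurable hU
  have hid : Integrable (fun v : ℝ => v) (Measure.map V P) := by
    rw [hVunif]
    exact (intervalIntegrable_iff_integrableOn_Ioo_of_le zero_le_one).1
      (continuous_id.intervalIntegrable 0 1)
  have hVi : Integrable V P := hid.comp_measurable hV
  have hVmean : ∫ ω, V ω ∂P = 1 / 2 := by
    rw [← integral_map (f := fun v : ℝ => v) hV.aemeasurable hid.aestronglyMeasurable, hVunif,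
      ← integral_Ioc_eq_integral_Ioo, ← intervalIntegral.integral_of_le zero_le_one, integral_id]
    norm_num
  have hind : IndepFun (fun ω => g (U ω)) V P := hindep.comp hgm measurable_id
  have hgV : Integrable (fun ω => g (U ω) * V ω) P := hind.integrable_mul hgU hVi
  have hsplit : ∀ ω, ((if U ω ≤ p then p * V ω else p + (1 - p) * V ω) - 1/2)
      * ((1 - |2 * U ω - 1|) - 1/2) = f (U ω) + g (U ω) * V ω := by
    intro ω
    simp only [f, g, t]
    split_ifs <;> ring
  have hIf : ∫ ω, f (U ω) ∂P
      = -1 / 2 * (∫ u in (0 : ℝ)..p, t u) + (p - 1 / 2) * ∫ u in p..1, t u := by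
    rw [← integral_map hU.aemeasurable hf.aestronglyMeasurable, hUunif]
    exact integral_step_mul t ht p _ _ hp
  have hIg : ∫ ω, g (U ω) ∂P
      = p * (∫ u in (0 : ℝ)..p, t u) + (1 - p) * ∫ u in p..1, t u := by
    rw [← integral_map hU.aemeasurable hg.aestronglyMeasurable, hUunif]
    exact integral_step_mul t ht p _ _ hp
  have htot : (∫ u in (0 : ℝ)..p, t u) + ∫ u in p..1, t u = 0 := by
    rw [intervalIntegral.integral_add_adjacent_intervals (ht.intervalIntegrable _ _)
      (ht.intervalIntegrable _ _)]
    exact integral_tent_total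
  simp_rw [hsplit]
  rw [integral_add hfU hgV, hind.integral_fun_mul_eq_mul_integral hgU.aestronglyMeasurable
    hVi.aestronglyMeasurable, hVmean, hIf, hIg]
  linear_combination 6 * p * htot

/-- Spearman's rho of the multilinear transform of a Bernoulli margin under the Tent Map
copula: with `U, V` independent uniforms on `(0,1)`, `T(u) = 1 - |2u - 1|`, `p ∈ (0,1)`,
and `U* = pV` if `U ≤ p`, `U* = p + (1-p)V` otherwise, the coefficient
`ρ_S = 12·E[(U* - 1/2)(T(U) - 1/2)]` equals `6p(1/2 - p)` when `p ≤ 1/2` and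
`-6(1-p)(p - 1/2)` when `p ≥ 1/2`; in particular `ρ_S = 0` when `p = 1/2`. -/
theorem stmt14 {Ω : Type*} [MeasurableSpace Ω] (P : Measure Ω) [IsProbabilityMeasure P]
    (U V : Ω → ℝ) (hU : Measurable U) (hV : Measurable V)
    (hUunif : Measure.map U P = volume.restrict (Set.Ioo (0:ℝ) 1))
    (hVunif : Measure.map V P = volume.restrict (Set.Ioo (0:ℝ) 1))
    (hindep : IndepFun U V P)
    (p : ℝ) (hp : p ∈ Set.Ioo (0:ℝ) 1) :
    (p ≤ 1/2 →
      12 * (∫ ω, ((if U ω ≤ p then p * V ω else p + (1 - p) * V ω) - 1/2)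
              * ((1 - |2 * U ω - 1|) - 1/2) ∂P)
        = 6 * p * (1/2 - p)) ∧
    (1/2 ≤ p →
      12 * (∫ ω, ((if U ω ≤ p then p * V ω else p + (1 - p) * V ω) - 1/2)
              * ((1 - |2 * U ω - 1|) - 1/2) ∂P)
        = -6 * (1 - p) * (p - 1/2)) ∧
    (p = 1/2 →
      12 * (∫ ω, ((if U ω ≤ p then p * V ω else p + (1 - p) * V ω) - 1/2)
              * ((1 - |2 * U ω - 1|) - 1/2) ∂P) = 0) := by
  rw [rho_eq_integral P U V hU hV hUunif hVunif hindep p hp]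
  have hle (h : p ≤ 1 / 2) := integral_tent_left 0 p hp.1.le h
  refine ⟨fun h => ?_, fun h => ?_, fun h => ?_⟩
  · rw [hle h]
    ring
  · rw [← intervalIntegral.integral_add_adjacent_intervals (b := 1 / 2)
      (Continuous.intervalIntegrable (by fun_prop) _ _)
      (Continuous.intervalIntegrable (by fun_prop) _ _),
      integral_tent_left _ _ (by norm_num) le_rfl, integral_tent_right _ _ h le_rfl]
    ring
  · rw [hle h.le, h]
    norm_num
end
end
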